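/- arXiv:2108.00142 — 3 statements merged into one kernel-verified Lean document; each statement's English description precedes it below -/
import Mathlib

section
/- Ep-bisimilarity ≈_ep is an equivalence relation on the set of states of any labelled transition system with successors. -/
/-!
Bisimulations are closed under the three relational operations that matter here. Reflexivity uses
the diagonal, each state `p` being paired with itself through the identity relation on `en p`;
symmetry uses the family of converses. For transitivity, the composites `R₁ ; R₂` of matching
triples `(p, q, R₁)` and `(q, r, R₂)` form an ep-bisimulation: a pair related by `R₁ ; R₂` factors
through a transition `w` enabled in `q`, the triples reached along both factors match at
`target w`, and successors are transferred through the middle component.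
-/

/-- A labelled transition system with successors (LTSS). -/
structure LTSS (S : Type*) (Tr : Type*) (Λ : Type*) where
  source : Tr → S
  target : Tr → S
  label : Tr → Λ
  /-- `succ t u v` means `t ⤳_u v`: `v` is a successor of `t` after `u`. -/
  succ : Tr → Tr → Tr → Prop
  succ_source : ∀ t u v, succ t u v → source t = source u
  succ_target : ∀ t u v, succ t u v → source v = target u

namespace LTSS

variable {S Tr Λ : Type*}

/-- The set of transitions enabled in a state `p`. -/
def en (L : LTSS S Tr Λ) (p : S) : Set Tr := {t | L.source t = p}

/-- An enabling preserving bisimulation (ep-bisimulation). -/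
def IsEpBisim (L : LTSS S Tr Λ) (ℛ : Set (S × S × Set (Tr × Tr))) : Prop :=
  ∀ p q R, (p, q, R) ∈ ℛ →
    (∀ t u : Tr, (t, u) ∈ R → t ∈ L.en p ∧ u ∈ L.en q) ∧
    (∀ t ∈ L.en p, ∃ u ∈ L.en q, (t, u) ∈ R) ∧
    (∀ u ∈ L.en q, ∃ t ∈ L.en p, (t, u) ∈ R) ∧
    (∀ t u : Tr, (t, u) ∈ R → L.label t = L.label u) ∧
    (∀ v w : Tr, (v, w) ∈ R → ∃ R', (L.target v, L.target w, R') ∈ ℛ ∧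
      (∀ t u t' : Tr, (t, u) ∈ R → L.succ t v t' → ∃ u', L.succ u w u' ∧ (t', u') ∈ R') ∧
      (∀ t u u' : Tr, (t, u) ∈ R → L.succ u w u' → ∃ t', L.succ t v t' ∧ (t', u') ∈ R'))

/-- Two states are enabling preserving bisimilar, `p ≈_ep q`. -/
def EpBisimilar (L : LTSS S Tr Λ) (p q : S) : Prop :=
  ∃ ℛ R, L.IsEpBisim ℛ ∧ (p, q, R) ∈ ℛ

end LTSS

namespace LTSS

variable {S Tr Λ : Type*}

/-- The triples `(p, p, id)`, where `id` is the identity relation on the transitions enabled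
in `p`. -/
def diagBisim (L : LTSS S Tr Λ) : Set (S × S × Set (Tr × Tr)) :=
  {x | x.2.1 = x.1 ∧ x.2.2 = {y | y.1 ∈ L.en x.1 ∧ y.2 = y.1}}

/-- The triples of `ℛ` read backwards: the two states are exchanged and the relation between
their transitions is replaced by its converse. -/
def converseBisim (ℛ : Set (S × S × Set (Tr × Tr))) : Set (S × S × Set (Tr × Tr)) :=
  {x | (x.2.1, x.1, {y | y.swap ∈ x.2.2}) ∈ ℛ}

/-- Relational composition `R₁ ; R₂`, in diagrammatic order. -/
def relComp (R₁ R₂ : Set (Tr × Tr)) : Set (Tr × Tr) :=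
  {x | ∃ u, (x.1, u) ∈ R₁ ∧ (u, x.2) ∈ R₂}

/-- The triples `(p, r, R₁ ; R₂)` with `(p, q, R₁) ∈ ℛ₁` and `(q, r, R₂) ∈ ℛ₂` for some common
state `q`. -/
def compBisim (ℛ₁ ℛ₂ : Set (S × S × Set (Tr × Tr))) : Set (S × S × Set (Tr × Tr)) :=
  {x | ∃ q R₁ R₂, (x.1, q, R₁) ∈ ℛ₁ ∧ (q, x.2.1, R₂) ∈ ℛ₂ ∧ x.2.2 = relComp R₁ R₂}

theorem isEpBisim_diag (L : LTSS S Tr Λ) : L.IsEpBisim L.diagBisim := by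
  rintro p q R ⟨hq, hR⟩
  dsimp only at hq hR
  subst hq hR
  refine ⟨?_, fun t ht => ⟨t, ht, ht, rfl⟩, fun t ht => ⟨t, ht, ht, rfl⟩, ?_, ?_⟩
  · rintro t u ⟨ht, hu⟩
    dsimp only at ht hu
    subst hu
    exact ⟨ht, ht⟩
  · rintro t u ⟨-, hu⟩
    dsimp only at hu
    rw [hu]
  · rintro v w ⟨-, hw⟩
    dsimp only at hw
    subst hw
    -- `succ_target` makes the successors after `w` enabled in `target w`.
    refine ⟨{y | y.1 ∈ L.en (L.target w) ∧ y.2 = y.1}, ⟨rfl, rfl⟩, ?_, ?_⟩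
    · rintro t u t' ⟨-, hu⟩ h
      dsimp only at hu
      subst hu
      exact ⟨t', h, L.succ_target _ _ _ h, rfl⟩
    · rintro t u u' ⟨-, hu⟩ h
      dsimp only at hu
      subst hu
      exact ⟨u', h, L.succ_target _ _ _ h, rfl⟩

theorem IsEpBisim.converse {L : LTSS S Tr Λ} {ℛ : Set (S × S × Set (Tr × Tr))}
    (h : L.IsEpBisim ℛ) : L.IsEpBisim (converseBisim ℛ) := by
  intro p q R hR
  obtain ⟨h₁, h₂, h₃, h₄, h₅⟩ := h _ _ _ hR
  refine ⟨fun t u htu => (h₁ u t htu).symm, h₃, h₂, fun t u htu => (h₄ u t htu).symm, ?_⟩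
  intro v w hvw
  obtain ⟨R', hR', ha, hb⟩ := h₅ w v hvw
  exact ⟨{y | y.swap ∈ R'}, hR', fun t u t' htu => hb u t t' htu,
    fun t u u' htu => ha u t u' htu⟩

theorem IsEpBisim.comp {L : LTSS S Tr Λ} {ℛ₁ ℛ₂ : Set (S × S × Set (Tr × Tr))}
    (h₁ : L.IsEpBisim ℛ₁) (h₂ : L.IsEpBisim ℛ₂) : L.IsEpBisim (compBisim ℛ₁ ℛ₂) := by
  rintro p r R ⟨q, R₁, R₂, hR₁, hR₂, hR⟩
  dsimp only at hR₁ hR₂ hR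
  subst hR
  obtain ⟨a₁, a₂, a₃, a₄, a₅⟩ := h₁ _ _ _ hR₁
  obtain ⟨b₁, b₂, b₃, b₄, b₅⟩ := h₂ _ _ _ hR₂
  refine ⟨?_, ?_, ?_, ?_, ?_⟩
  · rintro t s ⟨u, htu, hus⟩
    exact ⟨(a₁ _ _ htu).1, (b₁ _ _ hus).2⟩
  · intro t ht
    obtain ⟨u, hu, htu⟩ := a₂ t ht
    obtain ⟨s, hs, hus⟩ := b₂ u hu
    exact ⟨s, hs, u, htu, hus⟩
  · intro s hs
    obtain ⟨u, hu, hus⟩ := b₃ s hs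
    obtain ⟨t, ht, htu⟩ := a₃ u hu
    exact ⟨t, ht, u, htu, hus⟩
  · rintro t s ⟨u, htu, hus⟩
    exact (a₄ _ _ htu).trans (b₄ _ _ hus)
  · rintro v x ⟨w, hvw, hwx⟩
    obtain ⟨R₁', hR₁', c₁, c₂⟩ := a₅ _ _ hvw
    obtain ⟨R₂', hR₂', d₁, d₂⟩ := b₅ _ _ hwx
    refine ⟨relComp R₁' R₂', ⟨_, R₁', R₂', hR₁', hR₂', rfl⟩, ?_, ?_⟩
    · rintro t s t' ⟨u, htu, hus⟩ ht'
      obtain ⟨u', hu', htu'⟩ := c₁ _ _ _ htu ht'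
      obtain ⟨s', hs', hus'⟩ := d₁ _ _ _ hus hu'
      exact ⟨s', hs', u', htu', hus'⟩
    · rintro t s s' ⟨u, htu, hus⟩ hs'
      obtain ⟨u', hu', hus'⟩ := d₂ _ _ _ hus hs'
      obtain ⟨t', ht', htu'⟩ := c₂ _ _ _ htu hu'
      exact ⟨t', ht', u', htu', hus'⟩

end LTSS

/-- Ep-bisimilarity `≈_ep` is an equivalence relation on the set of states of any
labelled transition system with successors. -/
theorem epBisimilar_equivalence {S Tr Λ : Type*} (L : LTSS S Tr Λ) :
    Equivalence L.EpBisimilar := by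
  refine ⟨fun p => ⟨_, {y | y.1 ∈ L.en p ∧ y.2 = y.1}, L.isEpBisim_diag, rfl, rfl⟩, ?_, ?_⟩
  · rintro p q ⟨ℛ, R, h, hR⟩
    exact ⟨LTSS.converseBisim ℛ, {y | y.swap ∈ R}, h.converse, hR⟩
  · rintro p q r ⟨ℛ₁, R₁, h₁, hR₁⟩ ⟨ℛ₂, R₂, h₂, hR₂⟩
    exact ⟨_, _, h₁.comp h₂, q, R₁, R₂, hR₁, hR₂, rfl⟩
end

section
/- For any two ep-bisimulations ℛ₁ and ℛ₂ on an LTSS, the relation ℛ₁;ℛ₂ := {(p, r, R₁;R₂) | ∃q. (p,q,R₁) ∈ ℛ₁ ∧ (q,r,R₂) ∈ ℛ₂}, where R₁;R₂ := {(t,v) | ∃u. (t,u) ∈ R₁ ∧ (u,v) ∈ R₂}, is itself an ep-bisimulation. -/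
/-- For any two ep-bisimulations `ℛ₁` and `ℛ₂` on an LTSS, their relational
composition `ℛ₁;ℛ₂` is itself an ep-bisimulation. -/
theorem epBisim_comp {S Tr Λ : Type*} (L : LTSS S Tr Λ)
    (ℛ₁ ℛ₂ : Set (S × S × Set (Tr × Tr)))
    (h₁ : L.IsEpBisim ℛ₁) (h₂ : L.IsEpBisim ℛ₂) :
    L.IsEpBisim {x | ∃ p q r R₁ R₂, (p, q, R₁) ∈ ℛ₁ ∧ (q, r, R₂) ∈ ℛ₂ ∧
      x = (p, r, {tv : Tr × Tr | ∃ u, (tv.1, u) ∈ R₁ ∧ (u, tv.2) ∈ R₂})} := by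
  rintro p r _ ⟨_, q, _, R₁, R₂, hR₁, hR₂, ⟨⟩⟩
  obtain ⟨en₁, fwd₁, bwd₁, lab₁, step₁⟩ := h₁ p q R₁ hR₁
  obtain ⟨en₂, fwd₂, bwd₂, lab₂, step₂⟩ := h₂ q r R₂ hR₂
  refine ⟨?_, ?_, ?_, ?_, ?_⟩
  · rintro t v ⟨u, htu, huv⟩
    exact ⟨(en₁ t u htu).1, (en₂ u v huv).2⟩
  · intro t ht
    obtain ⟨u, hu, htu⟩ := fwd₁ t ht
    obtain ⟨v, hv, huv⟩ := fwd₂ u hu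
    exact ⟨v, hv, u, htu, huv⟩
  · intro v hv
    obtain ⟨u, hu, huv⟩ := bwd₂ v hv
    obtain ⟨t, ht, htu⟩ := bwd₁ u hu
    exact ⟨t, ht, u, htu, huv⟩
  · rintro t v ⟨u, htu, huv⟩
    exact (lab₁ t u htu).trans (lab₂ u v huv)
  · rintro a c ⟨b, hab, hbc⟩
    obtain ⟨R₁', hR₁', f₁, g₁⟩ := step₁ a b hab
    obtain ⟨R₂', hR₂', f₂, g₂⟩ := step₂ b c hbc
    refine ⟨_, ⟨_, _, _, R₁', R₂', hR₁', hR₂', rfl⟩, ?_, ?_⟩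
    · rintro t v t' ⟨u, htu, huv⟩ ht'
      obtain ⟨u', hu', htu'⟩ := f₁ t u t' htu ht'
      obtain ⟨v', hv', huv'⟩ := f₂ u v u' huv hu'
      exact ⟨v', hv', u', htu', huv'⟩
    · rintro t v v' ⟨u, htu, huv⟩ hv'
      obtain ⟨u', hu', huv'⟩ := g₂ u v v' huv hv'
      obtain ⟨t', ht', htu'⟩ := g₁ t u u' htu hu'
      exact ⟨t', ht', u', htu', huv'⟩
end

section
/- Ep-bisimilarity preserves justness: if π and π' are paths in an LTSS with π ≈_ep π', and B ⊆ Λ is any set of blocking labels, then π is B-just if and only if π' is B-just. -/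
namespace LTSS

variable {S Tr Λ : Type*}

/-- A path in an LTSS: an alternating sequence of states and transitions, starting
with a state, finite (`length = n`) or infinite (`length = ⊤`). -/
structure Path (L : LTSS S Tr Λ) where
  length : ℕ∞
  states : ℕ → S
  trans : ℕ → Tr
  source_eq : ∀ i : ℕ, (i : ℕ∞) < length → L.source (trans i) = states i
  target_eq : ∀ i : ℕ, (i : ℕ∞) < length → L.target (trans i) = states (i + 1)

/-- The successor relation lifted to finite sequences of transitions:
`t ⤳_ε t` and `t ⤳_{σu} w` iff `∃ v. t ⤳_σ v ∧ v ⤳_u w`. -/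
inductive SeqSucc (L : LTSS S Tr Λ) : Tr → List Tr → Tr → Prop where
  | nil (t : Tr) : SeqSucc L t [] t
  | snoc {t : Tr} {σ : List Tr} {v u w : Tr} :
      SeqSucc L t σ v → L.succ v u w → SeqSucc L t (σ ++ [u]) w

/-- Paths `π` and `π'` are related by `ℛ` via the witnessing relations `Rv`. -/
def PathRel (L : LTSS S Tr Λ) (ℛ : Set (S × S × Set (Tr × Tr)))
    (π π' : L.Path) (Rv : ℕ → Set (Tr × Tr)) : Prop :=
  π.length = π'.length ∧
  (∀ i : ℕ, (i : ℕ∞) ≤ π.length → (π.states i, π'.states i, Rv i) ∈ ℛ) ∧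
  (∀ i : ℕ, (i : ℕ∞) < π.length → (π.trans i, π'.trans i) ∈ Rv i) ∧
  (∀ i : ℕ, (i : ℕ∞) < π.length → ∀ t t' v : Tr, (t, t') ∈ Rv i →
    L.succ t (π.trans i) v →
    ∃ v', L.succ t' (π'.trans i) v' ∧ (v, v') ∈ Rv (i + 1)) ∧
  (∀ i : ℕ, (i : ℕ∞) < π.length → ∀ t t' v' : Tr, (t, t') ∈ Rv i →
    L.succ t' (π'.trans i) v' →
    ∃ v, L.succ t (π.trans i) v ∧ (v, v') ∈ Rv (i + 1))

end LTSS

namespace LTSS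

variable {S Tr Λ : Type*}

/-- Paths are ep-bisimilar if they are related by some ep-bisimulation via some
sequence of witnessing relations. -/
def PathEpBisimilar (L : LTSS S Tr Λ) (π π' : L.Path) : Prop :=
  ∃ ℛ Rv, L.IsEpBisim ℛ ∧ L.PathRel ℛ π π' Rv

/-- A path `π` is `B`-just if for each suffix `π₀` of `π` (starting at position `i`)
and each transition `t ∈ Tr•` (i.e. `¬ t ⌣• t`) with `ℓ(t) ∉ B` and `source(t)` the
first state of `π₀`, the suffix `π₀` has a finite prefix `ρ` with `¬ (t ⌣• ρ̂)`. -/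
def BJust (L : LTSS S Tr Λ) (B : Set Λ) (π : L.Path) : Prop :=
  ∀ i : ℕ, (i : ℕ∞) ≤ π.length → ∀ t : Tr,
    (¬ ∃ v, L.succ t t v) → L.label t ∉ B → L.source t = π.states i →
    ∃ k : ℕ, ((i + k : ℕ) : ℕ∞) ≤ π.length ∧
      ¬ ∃ v, L.SeqSucc t ((List.range k).map (fun j => π.trans (i + j))) v

end LTSS

namespace LTSS

variable {S Tr Λ : Type*}

lemma PathEpBisimilar.symm {L : LTSS S Tr Λ} {π π' : L.Path} (h : L.PathEpBisimilar π π') :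
    L.PathEpBisimilar π' π := by
  obtain ⟨ℛ, Rv, hℛ, hlen, hst, htr, hf, hb⟩ := h
  refine ⟨{x | (x.2.1, x.1, Prod.swap ⁻¹' x.2.2) ∈ ℛ}, fun i => Prod.swap ⁻¹' Rv i, ?_,
    hlen.symm, fun i hi => hst i (hlen ▸ hi), fun i hi => htr i (hlen ▸ hi),
    fun i hi t t' v ht => hb i (hlen ▸ hi) t' t v ht,
    fun i hi t t' v ht => hf i (hlen ▸ hi) t' t v ht⟩
  intro p q R hR
  obtain ⟨h1, h2, h3, h4, h5⟩ := hℛ q p _ hR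
  refine ⟨fun t u ht => (h1 u t ht).symm, h3, h2, fun t u ht => (h4 u t ht).symm, ?_⟩
  intro v w hvw
  obtain ⟨R', hR', hf', hb'⟩ := h5 w v hvw
  exact ⟨Prod.swap ⁻¹' R', hR', fun t u t' ht => hb' u t t' ht, fun t u u' ht => hf' u t u' ht⟩

lemma SeqSucc.exists_of_concat {L : LTSS S Tr Λ} {t w u : Tr} {σ : List Tr}
    (h : L.SeqSucc t (σ ++ [u]) w) : ∃ v, L.SeqSucc t σ v ∧ L.succ v u w := by
  generalize hτ : σ ++ [u] = τ at h
  cases h with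
  | nil => simp at hτ
  | snoc h₁ h₂ =>
    obtain ⟨rfl, hu⟩ := List.append_inj' hτ rfl
    obtain rfl : u = _ := by simpa using hu
    exact ⟨_, h₁, h₂⟩

/-- Successors of related transitions after corresponding path segments can be pulled back from
`π'` to `π`, with the resulting transitions again related. -/
lemma PathRel.exists_seqSucc {L : LTSS S Tr Λ} {ℛ : Set (S × S × Set (Tr × Tr))}
    {π π' : L.Path} {Rv : ℕ → Set (Tr × Tr)} (h : L.PathRel ℛ π π' Rv) {i : ℕ} {t t' : Tr}
    (ht : (t, t') ∈ Rv i) (k : ℕ) (hk : ((i + k : ℕ) : ℕ∞) ≤ π.length) (v' : Tr)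
    (hv' : L.SeqSucc t' ((List.range k).map (fun j => π'.trans (i + j))) v') :
    ∃ v, L.SeqSucc t ((List.range k).map (fun j => π.trans (i + j))) v ∧
      (v, v') ∈ Rv (i + k) := by
  induction k generalizing v' with
  | zero =>
    generalize hτ : (List.range 0).map (fun j => π'.trans (i + j)) = τ at hv'
    cases hv' with
    | nil => exact ⟨t, .nil t, ht⟩
    | snoc => simp at hτ
  | succ k ih =>
    have hlt : ((i + k : ℕ) : ℕ∞) < π.length :=
      lt_of_lt_of_le (by exact_mod_cast Nat.lt_succ_self (i + k)) hk
    rw [List.range_succ, List.map_append] at hv'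
    obtain ⟨w', hw', hs'⟩ := hv'.exists_of_concat
    obtain ⟨w, hw, hww'⟩ := ih hlt.le w' hw'
    obtain ⟨v, hs, hvv'⟩ := h.2.2.2.2 (i + k) hlt w w' v' hww' hs'
    refine ⟨v, ?_, hvv'⟩
    rw [List.range_succ, List.map_append]
    exact hw.snoc hs

lemma PathEpBisimilar.bJust {L : LTSS S Tr Λ} {B : Set Λ} {π π' : L.Path}
    (h : L.PathEpBisimilar π π') (hπ : L.BJust B π) : L.BJust B π' := by
  obtain ⟨ℛ, Rv, hℛ, hrel⟩ := h
  intro i hi t' hirr hB hsrc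
  rw [← hrel.1] at hi
  obtain ⟨h1, -, h3, h4, h5⟩ := hℛ _ _ _ (hrel.2.1 i hi)
  obtain ⟨t, hten, ht⟩ := h3 t' hsrc
  have hirr₀ : ¬ ∃ v, L.succ t t v := by
    rintro ⟨v, hv⟩
    -- Both the observed and the executed pair of transitions are `(t, t')`.
    obtain ⟨R', -, hf, -⟩ := h5 t t' ht
    obtain ⟨v', hv', -⟩ := hf t t' v ht hv
    exact hirr ⟨v', hv'⟩
  obtain ⟨k, hk, hno⟩ := hπ i hi t hirr₀ (by rwa [h4 t t' ht]) hten
  refine ⟨k, hrel.1 ▸ hk, ?_⟩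
  rintro ⟨v', hv'⟩
  obtain ⟨v, hv, -⟩ := hrel.exists_seqSucc ht k hk v' hv'
  exact hno ⟨v, hv⟩

end LTSS

/-- Ep-bisimilarity preserves justness: if `π ≈_ep π'` and `B` is any set of
blocking labels, then `π` is `B`-just iff `π'` is `B`-just. -/
theorem epBisimilar_preserves_justness {S Tr Λ : Type*} (L : LTSS S Tr Λ)
    (B : Set Λ) (π π' : L.Path) (h : L.PathEpBisimilar π π') :
    L.BJust B π ↔ L.BJust B π' := by
  exact ⟨h.bJust, h.symm.bJust⟩
end
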